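/- Suppose every state of the ε-Markov chain has a path to the absorbing set A using only regular edges. Let h'_{iS} denote the hitting probability of S ⊆ A from i for the Markov chain with transition matrix r (i.e., the chain obtained by deleting all ε-edges). Then for every state i and every S ⊆ A, lim_{ε→0⁺} h_{iS}(ε) = h'_{iS}; that is, deleting the ε-edges does not affect the limiting hitting probabilities. -/

import Mathlib

/-!
The limit is an instance of dominated convergence on the countable set of hitting paths: each path
weight is a polynomial in `ε` whose value at `0` is the weight for `r`, and for small
`ε > 0` it lies between `0` and the weight for the matrix `M = r + ε₀ c`. Everything rests on the summability of the
`M`-weights for some `ε₀ > 0`.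

Summability comes from a Lyapunov function. With `d v` the length of a shortest regular path from
`v` to `A` and `0 < δ < 1` smaller than every positive entry of `r`, the function `f v = 2 - δ ^ d v` is
at least `1` and satisfies `r f < f` strictly off `A` (`exists_lyapunov`). As `V` is finite,
`M f ≤ f` off `A` survives for small `ε₀`. A first-step induction on the path length then bounds
every finite sum of `M`-weights of hitting paths from `i` by `f i` (`sum_pathWeight_le`).
-/

open Filter Topology
open scoped Classical

noncomputable section

/-- Product of transition weights along a path (given as the list of visited states). -/
def pathWeight {W : Type*} (M : W → W → ℝ) (l : List W) : ℝ :=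
  ((l.zip l.tail).map fun p => M p.1 p.2).prod

/-- Row sums `t i = Σ_j c i j` of the ε-coefficients. -/
def rowT {V : Type*} [Fintype V] (c : V → V → ℝ) (i : V) : ℝ := ∑ j, c i j

/-- The transition matrix `P(ε) i j = (1 − ε·t i)·r i j + ε·c i j` of the ε-Markov chain. -/
def Pmat {V : Type*} [Fintype V] (r c : V → V → ℝ) (ε : ℝ) (i j : V) : ℝ :=
  (1 - ε * rowT c i) * r i j + ε * c i j

/-- A path from `i` hitting `S`: `i = v₀, …, v_k` with `v_k ∈ S` and `v₀, …, v_{k−1} ∉ A`. -/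
def IsHitPath {W : Type*} (A S : Set W) (i : W) (l : List W) : Prop :=
  l.head? = some i ∧ (∃ x ∈ S, l.getLast? = some x) ∧ ∀ p ∈ l.dropLast, p ∉ A

/-- The hitting probability of `S` from `i`: the sum over all finite paths
`i = v₀, …, v_k` with `v_k ∈ S` and `v₀, …, v_{k−1} ∉ A` of `Π_{m<k} M v_m v_{m+1}`. -/
def hitProb {W : Type*} (M : W → W → ℝ) (A S : Set W) (i : W) : ℝ :=
  ∑' l : {l : List W // IsHitPath A S i l}, pathWeight M l.1

lemma pathWeight_cons_cons {W : Type*} (M : W → W → ℝ) (a b : W) (l : List W) :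
    pathWeight M (a :: b :: l) = M a b * pathWeight M (b :: l) := by
  simp [pathWeight]

lemma pathWeight_singleton {W : Type*} (M : W → W → ℝ) (a : W) :
    pathWeight M [a] = 1 := by
  simp [pathWeight]

lemma pathWeight_nonneg {W : Type*} {M : W → W → ℝ} (hM : ∀ i j, 0 ≤ M i j) (l : List W) :
    0 ≤ pathWeight M l := by
  apply List.prod_nonneg
  simp only [List.mem_map]
  rintro _ ⟨p, _, rfl⟩
  exact hM _ _

lemma pathWeight_mono {W : Type*} {M N : W → W → ℝ} (hM : ∀ i j, 0 ≤ M i j)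
    (hMN : ∀ i j, M i j ≤ N i j) (l : List W) : pathWeight M l ≤ pathWeight N l := by
  match l with
  | [] => simp [pathWeight]
  | [a] => simp [pathWeight]
  | a :: b :: l =>
    rw [pathWeight_cons_cons, pathWeight_cons_cons]
    exact mul_le_mul (hMN _ _) (pathWeight_mono hM hMN _) (pathWeight_nonneg hM _)
      ((hM _ _).trans (hMN _ _))

lemma tendsto_pathWeight {V : Type*} [Fintype V] (r c : V → V → ℝ) (l : List V) :
    Tendsto (fun ε => pathWeight (Pmat r c ε) l) (𝓝[>] (0 : ℝ)) (𝓝 (pathWeight r l)) := by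
  match l with
  | [] => simp [pathWeight]
  | [a] => simp [pathWeight]
  | a :: b :: l =>
    simp only [pathWeight_cons_cons]
    refine Tendsto.mul ?_ (tendsto_pathWeight r c (b :: l))
    have h : Continuous fun ε => Pmat r c ε a b := by unfold Pmat; fun_prop
    have h0 := h.tendsto 0
    rw [show Pmat r c 0 a b = r a b by simp [Pmat]] at h0
    exact h0.mono_left nhdsWithin_le_nhds

lemma IsHitPath.eq_singleton {W : Type*} {A S : Set W} {i : W} {l : List W}
    (h : IsHitPath A S i l) (hi : i ∈ A) : l = [i] := by
  obtain ⟨h1, -, h3⟩ := h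
  match l with
  | [] => simp at h1
  | [a] => simpa using h1
  | a :: b :: l =>
    obtain rfl : a = i := by simpa using h1
    exact absurd hi (h3 a (by simp))

lemma IsHitPath.exists_cons {W : Type*} {A S : Set W} (hS : S ⊆ A) {i : W} {l : List W}
    (h : IsHitPath A S i l) (hi : i ∉ A) :
    ∃ j l', l = i :: j :: l' ∧ IsHitPath A S j (j :: l') := by
  obtain ⟨h1, ⟨x, hx, h2⟩, h3⟩ := h
  match l with
  | [] => simp at h1
  | [a] =>
    obtain rfl : a = i := by simpa using h1
    obtain rfl : a = x := by simpa using h2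
    exact absurd (hS hx) hi
  | a :: b :: l =>
    obtain rfl : a = i := by simpa using h1
    refine ⟨b, l, rfl, rfl, ⟨x, hx, by simpa using h2⟩, fun p hp => h3 p ?_⟩
    simp only [List.dropLast_cons_cons, List.mem_cons]
    exact Or.inr hp

/-- First-step analysis: a function `f ≥ 1` that is superharmonic for `M` off `A` bounds the total
`M`-weight of any finite set of hitting paths. -/
lemma sum_pathWeight_le {V : Type*} [Fintype V] {M : V → V → ℝ} (hM : ∀ i j, 0 ≤ M i j)
    {A S : Set V} (hS : S ⊆ A) {f : V → ℝ} (hf1 : ∀ v, 1 ≤ f v)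
    (hf : ∀ v, v ∉ A → ∑ w, M v w * f w ≤ f v) (n : ℕ) (i : V) (T : Finset (List V))
    (hT : ∀ l ∈ T, IsHitPath A S i l) (hn : ∀ l ∈ T, l.length ≤ n) :
    ∑ l ∈ T, pathWeight M l ≤ f i := by
  induction n generalizing i T with
  | zero =>
    have hE : T = ∅ := by
      refine Finset.eq_empty_of_forall_notMem fun l hl => ?_
      obtain rfl : l = [] := by simpa using hn l hl
      simpa using (hT _ hl).1
    rw [hE, Finset.sum_empty]
    linarith [hf1 i]
  | succ n ih =>
    by_cases hi : i ∈ A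
    · have hsub : T ⊆ {[i]} := fun l hl => by simpa using (hT l hl).eq_singleton hi
      calc ∑ l ∈ T, pathWeight M l ≤ ∑ l ∈ {[i]}, pathWeight M l :=
            Finset.sum_le_sum_of_subset_of_nonneg hsub fun l _ _ => pathWeight_nonneg hM l
        _ = 1 := by rw [Finset.sum_singleton, pathWeight_singleton]
        _ ≤ f i := hf1 i
    · refine le_trans ?_ (hf i hi)
      -- Split `T` according to the second state of the path.
      rw [← Finset.sum_fiberwise T (fun l => l.tail.headD i) (pathWeight M)]
      refine Finset.sum_le_sum fun j _ => ?_
      have key : ∀ l ∈ T.filter (fun l => l.tail.headD i = j),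
          ∃ l', l = i :: j :: l' ∧ IsHitPath A S j (j :: l') := by
        intro l hl
        rw [Finset.mem_filter] at hl
        obtain ⟨k, l', rfl, h⟩ := (hT l hl.1).exists_cons hS hi
        obtain rfl : k = j := by simpa using hl.2
        exact ⟨l', rfl, h⟩
      calc ∑ l ∈ T.filter (fun l => l.tail.headD i = j), pathWeight M l
          = ∑ l ∈ T.filter (fun l => l.tail.headD i = j), M i j * pathWeight M l.tail := by
            refine Finset.sum_congr rfl fun l hl => ?_
            obtain ⟨l', rfl, -⟩ := key l hl
            rw [pathWeight_cons_cons, List.tail_cons]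
        _ = M i j * ∑ l ∈ (T.filter (fun l => l.tail.headD i = j)).image List.tail,
              pathWeight M l := by
            rw [Finset.mul_sum, Finset.sum_image]
            intro a ha b hb hab
            obtain ⟨a', rfl, -⟩ := key a ha
            obtain ⟨b', rfl, -⟩ := key b hb
            simpa using hab
        _ ≤ M i j * f j := by
            refine mul_le_mul_of_nonneg_left (ih j _ ?_ ?_) (hM i j)
            · intro l hl
              obtain ⟨m, hm, rfl⟩ := Finset.mem_image.1 hl
              obtain ⟨m', rfl, h⟩ := key m hm
              exact h
            · intro l hl
              obtain ⟨m, hm, rfl⟩ := Finset.mem_image.1 hl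
              have := hn m (Finset.mem_filter.1 hm).1
              rw [List.length_tail]
              omega

/-- The rank is the length of a shortest regular path to `A`. -/
lemma exists_rank {V : Type*} (r : V → V → ℝ) (A : Set V)
    (hpath : ∀ i, ∃ l : List V, l.head? = some i ∧ l.IsChain (fun a b => 0 < r a b) ∧
      ∃ x ∈ A, l.getLast? = some x) :
    ∃ d : V → ℕ, ∀ v, v ∉ A → ∃ w, 0 < r v w ∧ d w < d v := by
  have hex : ∀ i, ∃ n, ∃ l : List V, l.length = n ∧ l.head? = some i ∧
      l.IsChain (fun a b => 0 < r a b) ∧ ∃ x ∈ A, l.getLast? = some x :=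
    fun i => let ⟨l, h⟩ := hpath i; ⟨_, l, rfl, h⟩
  refine ⟨fun i => Nat.find (hex i), fun v hv => ?_⟩
  obtain ⟨l, hl, h1, h2, x, hx, h3⟩ := Nat.find_spec (hex v)
  match l with
  | [] => simp at h1
  | [a] =>
    obtain rfl : a = v := by simpa using h1
    obtain rfl : a = x := by simpa using h3
    exact absurd hx hv
  | a :: b :: l =>
    obtain rfl : a = v := by simpa using h1
    rw [List.isChain_cons_cons] at h2
    refine ⟨b, h2.1, ?_⟩
    have : Nat.find (hex b) ≤ (b :: l).length :=
      Nat.find_min' (hex b) ⟨b :: l, rfl, rfl, h2.2, x, hx, by simpa using h3⟩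
    simp only [List.length_cons] at this hl
    change Nat.find (hex b) < Nat.find (hex a)
    omega

lemma exists_lyapunov {V : Type*} [Fintype V] (r : V → V → ℝ) (A : Set V)
    (hr0 : ∀ i j, 0 ≤ r i j) (hr1 : ∀ i, ∑ j, r i j = 1)
    (hpath : ∀ i, ∃ l : List V, l.head? = some i ∧ l.IsChain (fun a b => 0 < r a b) ∧
      ∃ x ∈ A, l.getLast? = some x) :
    ∃ f : V → ℝ, (∀ v, 1 ≤ f v) ∧ ∀ v, v ∉ A → ∑ w, r v w * f w < f v := by
  obtain ⟨d, hd⟩ := exists_rank r A hpath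
  obtain ⟨δ, hδ0, hδ1, hδ⟩ : ∃ δ : ℝ, 0 < δ ∧ δ < 1 ∧ ∀ v w, 0 < r v w → δ < r v w := by
    have h : ∀ᶠ δ in 𝓝[>] (0 : ℝ), 0 < δ ∧ δ < 1 ∧ ∀ v w, 0 < r v w → δ < r v w := by
      refine eventually_mem_nhdsWithin.and (Eventually.and ?_ ?_)
      · exact (eventually_lt_nhds one_pos).filter_mono nhdsWithin_le_nhds
      · simp only [eventually_all]
        exact fun v w h => (eventually_lt_nhds h).filter_mono nhdsWithin_le_nhds
    exact h.exists
  refine ⟨fun v => 2 - δ ^ d v, fun v => ?_, fun v hv => ?_⟩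
  · have := pow_le_one₀ hδ0.le hδ1.le (n := d v)
    linarith
  · obtain ⟨w, hw, hdw⟩ := hd v hv
    have h1 : r v w * δ ^ d w ≤ ∑ u, r v u * δ ^ d u :=
      Finset.single_le_sum (f := fun u => r v u * δ ^ d u)
        (fun u _ => mul_nonneg (hr0 v u) (pow_nonneg hδ0.le _)) (Finset.mem_univ w)
    have h2 : δ ^ d v < r v w * δ ^ d w :=
      calc δ ^ d v ≤ δ ^ (d w + 1) := pow_le_pow_of_le_one hδ0.le hδ1.le hdw
        _ = δ * δ ^ d w := pow_succ' _ _
        _ < r v w * δ ^ d w := mul_lt_mul_of_pos_right (hδ v w hw) (pow_pos hδ0 _)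
    have h3 : ∑ u, r v u * (2 - δ ^ d u) = 2 - ∑ u, r v u * δ ^ d u := by
      simp only [mul_sub, Finset.sum_sub_distrib, ← Finset.sum_mul, hr1, one_mul]
    rw [h3]
    linarith

/-- if every state has a path to `A` using only regular edges, then deleting
the ε-edges does not affect the limiting hitting probabilities:
`lim_{ε→0⁺} h_{iS}(ε) = h'_{iS}`, where `h'` is computed for the matrix `r`. -/
theorem delete_eps_edges_preserves_limit_hitProb
    {V : Type*} [Fintype V] (r c : V → V → ℝ) (A : Set V)
    (hr0 : ∀ i j, 0 ≤ r i j) (hr1 : ∀ i, ∑ j, r i j = 1)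
    (hc0 : ∀ i j, 0 ≤ c i j)
    (hAr : ∀ i ∈ A, r i i = 1) (hAc : ∀ i ∈ A, ∀ j, c i j = 0)
    (hpath : ∀ i, ∃ l : List V, l.head? = some i ∧ l.Chain' (fun a b => 0 < r a b) ∧
      ∃ x ∈ A, l.getLast? = some x)
    (S : Set V) (hS : S ⊆ A) (i : V) :
    Filter.Tendsto (fun ε => hitProb (Pmat r c ε) A S i) (𝓝[>] (0:ℝ))
      (𝓝 (hitProb r A S i)) := by
  obtain ⟨f, hf1, hf⟩ := exists_lyapunov r A hr0 hr1 hpath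
  -- The strict Lyapunov inequality is an open condition, so it holds for `r + ε₀ c`.
  obtain ⟨ε₀, hε₀, hM⟩ : ∃ ε₀ : ℝ, 0 < ε₀ ∧
      ∀ v, v ∉ A → ∑ w, (r v w + ε₀ * c v w) * f w < f v := by
    have h : ∀ᶠ ε in 𝓝[>] (0 : ℝ), 0 < ε ∧
        ∀ v, v ∉ A → ∑ w, (r v w + ε * c v w) * f w < f v := by
      refine eventually_mem_nhdsWithin.and ?_
      simp only [eventually_all]
      intro v hv
      have hcont : Continuous fun ε : ℝ => ∑ w, (r v w + ε * c v w) * f w := by fun_prop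
      have h0 := hcont.tendsto 0
      exact (h0.eventually_lt_const (by simpa using hf v hv)).filter_mono nhdsWithin_le_nhds
    exact h.exists
  have hM0 : ∀ i j, 0 ≤ r i j + ε₀ * c i j := fun i j =>
    add_nonneg (hr0 i j) (mul_nonneg hε₀.le (hc0 i j))
  have hsum : Summable fun l : {l : List V // IsHitPath A S i l} =>
      pathWeight (fun i j => r i j + ε₀ * c i j) l.1 := by
    refine summable_of_sum_le (c := f i) (fun l => pathWeight_nonneg hM0 l.1) fun u => ?_
    have h := sum_pathWeight_le hM0 hS hf1 (fun v hv => (hM v hv).le)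
      ((u.map (Function.Embedding.subtype _)).sup List.length) i
      (u.map (Function.Embedding.subtype _)) ?_ fun l hl => Finset.le_sup hl
    · simpa using h
    · intro l hl
      obtain ⟨m, -, rfl⟩ := Finset.mem_map.1 hl
      exact m.2
  refine tendsto_tsum_of_dominated_convergence hsum
    (fun l => tendsto_pathWeight r c l.1) ?_
  have hrow : ∀ᶠ ε in 𝓝[>] (0 : ℝ), ∀ i, ε * rowT c i < 1 := by
    simp only [eventually_all]
    intro i
    have hcont : Continuous fun ε : ℝ => ε * rowT c i := by fun_prop
    exact ((hcont.tendsto 0).eventually_lt_const (by simp)).filter_mono nhdsWithin_le_nhds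
  filter_upwards [hrow, eventually_mem_nhdsWithin,
    (eventually_lt_nhds hε₀).filter_mono nhdsWithin_le_nhds] with ε h1 h2 h3 l
  have hε : 0 < ε := h2
  have hP0 : ∀ i j, 0 ≤ Pmat r c ε i j := fun i j =>
    add_nonneg (mul_nonneg (sub_nonneg.2 (h1 i).le) (hr0 i j)) (mul_nonneg hε.le (hc0 i j))
  rw [Real.norm_of_nonneg (pathWeight_nonneg hP0 _)]
  refine pathWeight_mono hP0 (fun i j => ?_) _
  have ht : 0 ≤ ε * rowT c i := mul_nonneg hε.le (Finset.sum_nonneg fun j _ => hc0 i j)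
  refine add_le_add (mul_le_of_le_one_left (hr0 i j) (by linarith)) ?_
  exact mul_le_mul_of_nonneg_right h3.le (hc0 i j)

end
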